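/- Let μ > 0, let r > 3, and let f : ℝⁿ → ℝ be a continuously differentiable μ-strongly convex function with global minimizer x*. Let x : (0,∞) → ℝⁿ be a twice differentiable solution of ẍ(t) + (r/t)·ẋ(t) + ∇f(x(t)) = 0 for all t > 0. Then f(x(t)) − f(x*) = O( t^{−2r/3} ) as t → ∞. -/

import Mathlib

open scoped RealInnerProductSpace

section NagFlow

variable {E : Type*} [NormedAddCommGroup E] [InnerProductSpace ℝ E]

/-- The Lyapunov function of the flow `ẍ + (r / t) ẋ + ∇f(x) = 0` before multiplication by
`t ^ θ`, where `h = f ∘ x - f*`, `z = x - x*` and `v = ẋ`. -/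
noncomputable def nagEnergy (θ c : ℝ) (h : ℝ → ℝ) (z v : ℝ → E) (t : ℝ) : ℝ :=
  h t + 1 / 2 * ⟪v t, v t⟫ + θ * (t⁻¹ * ⟪z t, v t⟫) + c * ((t⁻¹) ^ 2 * ⟪z t, z t⟫)

theorem hasDerivAt_nagEnergy {θ c h' t : ℝ} {h : ℝ → ℝ} {z v : ℝ → E} {a : E} (ht : t ≠ 0)
    (hh : HasDerivAt h h' t) (hz : HasDerivAt z (v t) t) (hv : HasDerivAt v a t) :
    HasDerivAt (nagEnergy θ c h z v)
      (h' + ⟪v t, a⟫ + θ * (-(t⁻¹) ^ 2 * ⟪z t, v t⟫ + t⁻¹ * (⟪v t, v t⟫ + ⟪z t, a⟫))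
        + c * (-2 * (t⁻¹) ^ 3 * ⟪z t, z t⟫ + (t⁻¹) ^ 2 * (2 * ⟪z t, v t⟫))) t := by
  have hi := hasDerivAt_inv ht
  have key := ((hh.add ((hv.inner ℝ hv).const_mul (1 / 2))).add
    ((hi.mul (hz.inner ℝ hv)).const_mul θ)).add
    (((hi.pow 2).mul (hz.inner ℝ hz)).const_mul c)
  refine key.congr_deriv ?_
  rw [real_inner_comm (v t) a, real_inner_comm (z t) (v t)]
  simp only [Pi.pow_apply, ← inv_pow]
  push_cast
  ring

/-- The dissipation estimate: `t ↦ t ^ θ * nagEnergy` has nonpositive derivative for large `t`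
when `θ = 2r/3` and `2c = θ (r + 1 - θ)`. -/
theorem nagEnergy_dissipation {r μ θ c t h : ℝ} {z v a g : E} (ht : 0 < t) (hr : 0 < r)
    (hθ : θ = 2 * r / 3) (hc : c = θ * (r / 3 + 1) / 2)
    (hode : a + (r / t) • v + g = 0) (hS : h + μ / 2 * ⟪z, z⟫ ≤ ⟪z, g⟫)
    (hT : 2 * c ≤ μ * t ^ 2) :
    θ * (h + 1 / 2 * ⟪v, v⟫ + θ * (t⁻¹ * ⟪z, v⟫) + c * ((t⁻¹) ^ 2 * ⟪z, z⟫))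
      + t * (⟪g, v⟫ + ⟪v, a⟫ + θ * (-(t⁻¹) ^ 2 * ⟪z, v⟫ + t⁻¹ * (⟪v, v⟫ + ⟪z, a⟫))
        + c * (-2 * (t⁻¹) ^ 3 * ⟪z, z⟫ + (t⁻¹) ^ 2 * (2 * ⟪z, v⟫))) ≤ 0 := by
  have ha : a = -((r / t) • v) - g := by
    rw [← sub_eq_zero, ← hode]; abel
  have hva : ⟪v, a⟫ = -(r / t) * ⟪v, v⟫ - ⟪g, v⟫ := by
    rw [ha, inner_sub_right, inner_neg_right, real_inner_smul_right, real_inner_comm v g]; ring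
  have hza : ⟪z, a⟫ = -(r / t) * ⟪z, v⟫ - ⟪z, g⟫ := by
    rw [ha, inner_sub_right, inner_neg_right, real_inner_smul_right]; ring
  have hθ0 : 0 < θ := by rw [hθ]; positivity
  have hc0 : 0 < c := by rw [hc]; positivity
  have hZ : 0 ≤ ⟪z, z⟫ := real_inner_self_nonneg
  have hcT : c * (t⁻¹) ^ 2 ≤ μ / 2 := by
    rw [inv_pow, ← div_eq_mul_inv, div_le_iff₀ (by positivity)]; linarith
  rw [hva, hza]
  have heq : θ * (h + 1 / 2 * ⟪v, v⟫ + θ * (t⁻¹ * ⟪z, v⟫) + c * ((t⁻¹) ^ 2 * ⟪z, z⟫))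
      + t * (⟪g, v⟫ + (-(r / t) * ⟪v, v⟫ - ⟪g, v⟫) + θ * (-(t⁻¹) ^ 2 * ⟪z, v⟫
        + t⁻¹ * (⟪v, v⟫ + (-(r / t) * ⟪z, v⟫ - ⟪z, g⟫)))
        + c * (-2 * (t⁻¹) ^ 3 * ⟪z, z⟫ + (t⁻¹) ^ 2 * (2 * ⟪z, v⟫)))
      = θ * (h - ⟪z, g⟫) + (θ - 2) * (c * (t⁻¹) ^ 2) * ⟪z, z⟫ := by
    rw [hc, hθ]; field_simp; ring
  rw [heq]
  have h1 : θ * (h - ⟪z, g⟫) ≤ θ * (-(μ / 2 * ⟪z, z⟫)) :=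
    mul_le_mul_of_nonneg_left (by linarith) hθ0.le
  have h2 : θ * (c * (t⁻¹) ^ 2 * ⟪z, z⟫) ≤ θ * (μ / 2 * ⟪z, z⟫) := by gcongr
  have h3 : 0 ≤ c * (t⁻¹) ^ 2 * ⟪z, z⟫ := by positivity
  linarith

theorem half_le_nagEnergy {μ θ c t : ℝ} {h : ℝ → ℝ} {z v : ℝ → E} (ht : 0 < t) (hc : 0 ≤ c)
    (hh : μ / 2 * ⟪z t, z t⟫ ≤ h t) (hT : 2 * θ ^ 2 ≤ μ * t ^ 2) :
    h t / 2 ≤ nagEnergy θ c h z v t := by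
  have hZ : 0 ≤ ⟪z t, z t⟫ := real_inner_self_nonneg
  have hsq : 0 ≤ ⟪v t + (θ * t⁻¹) • z t, v t + (θ * t⁻¹) • z t⟫ := real_inner_self_nonneg
  rw [real_inner_add_add_self, real_inner_smul_right, real_inner_smul_right,
    real_inner_smul_left, real_inner_comm (z t) (v t)] at hsq
  have hθT : (θ * t⁻¹) ^ 2 ≤ μ / 2 := by
    rw [mul_pow, inv_pow, ← div_eq_mul_inv, div_le_iff₀ (by positivity)]; linarith
  have h1 : (θ * t⁻¹) ^ 2 * ⟪z t, z t⟫ ≤ μ / 2 * ⟪z t, z t⟫ := by gcongr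
  have h2 : 0 ≤ c * ((t⁻¹) ^ 2 * ⟪z t, z t⟫) := by positivity
  unfold nagEnergy
  linarith

end NagFlow

/-- For `μ > 0`, `r > 3` and a continuously differentiable `μ`-strongly
convex `f` with minimizer `x*`, any twice differentiable solution (on `(0,∞)`) of
`ẍ(t) + (r/t)·ẋ(t) + ∇f(x(t)) = 0` satisfies `f(x(t)) − f(x*) = O(t^{−2r/3})`. -/
theorem nag_flow_strongly_convex_su_boyd_candes_rate {n : ℕ}
    (μ r : ℝ) (hμ : 0 < μ) (hr : 3 < r)
    (f : EuclideanSpace ℝ (Fin n) → ℝ)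
    (xstar : EuclideanSpace ℝ (Fin n))
    (hf : ContDiff ℝ 1 f)
    (hmin : ∀ y, f xstar ≤ f y)
    (hsc : ∀ y z : EuclideanSpace ℝ (Fin n),
      f z ≥ f y + ⟪gradient f y, z - y⟫ + μ / 2 * ‖z - y‖ ^ 2)
    (x v a : ℝ → EuclideanSpace ℝ (Fin n))
    (hx : ∀ t : ℝ, 0 < t → HasDerivAt x (v t) t)
    (hv : ∀ t : ℝ, 0 < t → HasDerivAt v (a t) t)
    (hode : ∀ t : ℝ, 0 < t → a t + (r / t) • v t + gradient f (x t) = 0) :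
    ∃ T C : ℝ, 0 < T ∧ 0 < C ∧
      ∀ t : ℝ, T ≤ t → f (x t) - f xstar ≤ C * t ^ (-(2 * r / 3)) := by
  have hgrad (y) : HasGradientAt f (gradient f y) y :=
    (hf.differentiable one_ne_zero y).hasGradientAt
  have hgrad0 : gradient f xstar = 0 := by
    have : IsLocalMin f xstar := Filter.Eventually.of_forall hmin
    rw [gradient, this.fderiv_eq_zero, map_zero]
  obtain ⟨θ, hθ⟩ : ∃ θ, θ = 2 * r / 3 := ⟨_, rfl⟩
  obtain ⟨c, hc⟩ : ∃ c, c = θ * (r / 3 + 1) / 2 := ⟨_, rfl⟩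
  have hθ0 : 0 < θ := by rw [hθ]; linarith
  have hc0 : 0 < c := by rw [hc]; positivity
  let h : ℝ → ℝ := fun t => f (x t) - f xstar
  let z : ℝ → EuclideanSpace ℝ (Fin n) := fun t => x t - xstar
  have hgrow (t) : μ / 2 * ⟪z t, z t⟫ ≤ h t := by
    have := hsc xstar (x t)
    rw [hgrad0, inner_zero_left, ← real_inner_self_eq_norm_sq] at this
    simp only [h, z]; linarith
  have hS (t) : h t + μ / 2 * ⟪z t, z t⟫ ≤ ⟪z t, gradient f (x t)⟫ := by
    have := hsc (x t) xstar
    rw [← neg_sub (x t) xstar, inner_neg_right, norm_neg, ← real_inner_self_eq_norm_sq,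
      real_inner_comm] at this
    simp only [h, z]; linarith
  have hh (t) (ht : 0 < t) : HasDerivAt h ⟪gradient f (x t), v t⟫ t := by
    simpa [h] using ((hgrad (x t)).hasFDerivAt.comp_hasDerivAt t (hx t ht)).sub_const (f xstar)
  let G := nagEnergy θ c h z v
  have hF (t) (ht : 0 < t) := (Real.hasDerivAt_rpow_const (p := θ) (Or.inl ht.ne')).mul
    (hasDerivAt_nagEnergy (θ := θ) (c := c) ht.ne' (hh t ht) ((hx t ht).sub_const xstar) (hv t ht))
  obtain ⟨T, hT⟩ : ∃ T, T = 1 + 2 * θ ^ 2 / μ + 2 * c / μ := ⟨_, rfl⟩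
  have hp1 : 0 < 2 * θ ^ 2 / μ := by positivity
  have hp2 : 0 < 2 * c / μ := by positivity
  have hT1 : 1 ≤ T := by linarith
  have hlarge (t) (ht : T ≤ t) : 2 * c ≤ μ * t ^ 2 ∧ 2 * θ ^ 2 ≤ μ * t ^ 2 := by
    have hsq : T ≤ t ^ 2 := by nlinarith
    constructor
    · rw [mul_comm μ, ← div_le_iff₀ hμ]; linarith
    · rw [mul_comm μ, ← div_le_iff₀ hμ]; linarith
  have hanti : AntitoneOn (fun t => t ^ θ * G t) (Set.Ici T) := by
    refine antitoneOn_of_deriv_nonpos (convex_Ici T)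
      (fun t ht => (hF t (by linarith [Set.mem_Ici.1 ht])).continuousAt.continuousWithinAt)
      (fun t ht => ?_) (fun t ht => ?_)
    · rw [interior_Ici, Set.mem_Ioi] at ht
      exact (hF t (by linarith)).differentiableAt.differentiableWithinAt
    · rw [interior_Ici, Set.mem_Ioi] at ht
      have ht0 : 0 < t := by linarith
      have hdis := nagEnergy_dissipation ht0 (by linarith) hθ hc (hode t ht0) (hS t)
        (hlarge t ht.le).1
      refine (hF t ht0).deriv.trans_le ?_
      have hpow : t ^ θ = t ^ (θ - 1) * t := by
        rw [← Real.rpow_add_one ht0.ne', sub_add_cancel]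
      rw [hpow]
      refine le_of_eq_of_le ?_ (mul_nonpos_of_nonneg_of_nonpos
        (Real.rpow_nonneg ht0.le (θ - 1)) hdis)
      unfold nagEnergy
      ring
  refine ⟨T, 2 * |T ^ θ * G T| + 1, by linarith, by positivity, fun t ht => ?_⟩
  have ht0 : 0 < t := by linarith
  have hle : t ^ θ * G t ≤ T ^ θ * G T := hanti Set.self_mem_Ici ht ht
  have hlow : h t / 2 ≤ G t := half_le_nagEnergy ht0 hc0.le (hgrow t) (hlarge t ht).2
  have hpos : 0 < t ^ θ := Real.rpow_pos_of_pos ht0 θ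
  rw [← hθ, Real.rpow_neg ht0.le, ← div_eq_mul_inv, le_div_iff₀ hpos]
  have hmul := mul_le_mul_of_nonneg_left hlow hpos.le
  have habs := le_abs_self (T ^ θ * G T)
  change h t * t ^ θ ≤ _
  linarith
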